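/- Let x be a positive rational number. Then every rational number t ∈ (0,1) has a finite backward x-continued-fraction expansion — that is, for every rational t ∈ (0,1) there exists n ∈ ℕ with S_x^n(t) = 0 — if and only if x is a positive integer. -/

import Mathlib

/-!
On rational arguments the map is the rational map `SmapRat`, so everything happens in `ℚ`.

If `x = m` is an integer and `t = p / q` with `0 < p < q`, then `x / (1 - t) = m q / (q - p)`, so the
denominator of `S_x(t)` divides `q - p < q` (`SmapRat_den_lt`). Denominators drop strictly until the
orbit hits `0`.

If `x` is not an integer, pick a prime `p` dividing its denominator, so `|x|_p > 1`. The set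
`{t : |t|_p > 1}` is invariant: there `|1 - t|_p > 1`, so `|x / (1 - t)|_p < |x|_p`, and the term `x`
dominates both `x / (1 - t)` and the integer part, giving `|S_x(t)|_p = |x|_p > 1`
(`one_lt_padicNorm_SmapRat`). As `0` is not in this set, the orbit of `1 / p` never reaches `0`.
-/

/-- The backward x-Gauss map `S_x(t) = (x/(1-t) - x) - ⌊x/(1-t) - x⌋`. -/
noncomputable def Smap (x : ℝ) (t : ℝ) : ℝ := Int.fract (x / (1 - t) - x)

/-- The backward `x`-Gauss map on rational numbers. -/
def SmapRat (x t : ℚ) : ℚ := Int.fract (x / (1 - t) - x)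

lemma Smap_iterate_cast (x t : ℚ) (n : ℕ) :
    (Smap (x : ℝ))^[n] (t : ℝ) = (((SmapRat x)^[n] t : ℚ) : ℝ) := by
  have h : Function.Semiconj (fun q : ℚ => (q : ℝ)) (SmapRat x) (Smap (x : ℝ)) := by
    intro q
    simp [SmapRat, Smap, Rat.cast_fract]
  exact ((h.iterate_right n) t).symm

lemma SmapRat_den_lt (m : ℕ) (t : ℚ) (h0 : 0 < t) (h1 : t < 1) :
    (SmapRat m t).den < t.den := by
  have hp : 0 < t.num := Rat.num_pos.2 h0
  have hpq : t.num < t.den := Rat.num_lt_denom_iff.2 h1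
  have hq : (t.den : ℚ) ≠ 0 := by exact_mod_cast t.den_ne_zero
  have hqp : ((t.den : ℚ) - t.num) ≠ 0 := by
    have : (t.num : ℚ) < t.den := by exact_mod_cast hpq
    linarith
  have ht : 1 - t = ((t.den : ℚ) - t.num) / t.den := by
    nth_rewrite 1 [← Rat.num_div_den t]
    field_simp
  obtain ⟨d, hd⟩ : ∃ d : ℤ, SmapRat m t = (m : ℚ) / (1 - t) - m - d := ⟨_, rfl⟩
  have key : SmapRat m t =
      ((m * t.den - (m + d) * (t.den - t.num) : ℤ) : ℚ) / ((t.den - t.num : ℤ) : ℚ) := by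
    rw [hd, ht]
    push_cast
    field_simp
    ring
  have hdvd : ((SmapRat m t).den : ℤ) ∣ t.den - t.num := by
    rw [key, ← Rat.divInt_eq_div]
    exact Rat.den_dvd _ _
  have := Int.le_of_dvd (by omega) hdvd
  omega

lemma exists_iterate_eq_zero (m N : ℕ) :
    ∀ t : ℚ, 0 ≤ t → t < 1 → t.den ≤ N → ∃ n : ℕ, (SmapRat m)^[n] t = 0 := by
  induction N with
  | zero => intro t _ _ h; have := t.den_pos; omega
  | succ N ih =>
    intro t h0 h1 hN
    rcases h0.eq_or_lt with h | h
    · exact ⟨0, h.symm⟩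
    · have := SmapRat_den_lt m t h h1
      obtain ⟨n, hn⟩ := ih (SmapRat m t) (Int.fract_nonneg _) (Int.fract_lt_one _) (by omega)
      exact ⟨n + 1, hn⟩

lemma padicNorm_sub_of_lt {p : ℕ} [Fact p.Prime] {a b : ℚ}
    (h : padicNorm p b < padicNorm p a) : padicNorm p (a - b) = padicNorm p a := by
  have hb : padicNorm p (-b) = padicNorm p b := padicNorm.neg b
  rw [sub_eq_add_neg, padicNorm.add_eq_max_of_ne (by rw [hb]; exact h.ne'), hb,
    max_eq_left h.le]

lemma one_lt_padicNorm_SmapRat {p : ℕ} [Fact p.Prime] {x t : ℚ}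
    (hx : 1 < padicNorm p x) (ht : 1 < padicNorm p t) : 1 < padicNorm p (SmapRat x t) := by
  have h1 : padicNorm p (1 - t) = padicNorm p t := by
    rw [← padicNorm.neg, neg_sub]
    exact padicNorm_sub_of_lt (by rwa [padicNorm.one])
  have h2 : padicNorm p (x / (1 - t)) < padicNorm p x := by
    rw [padicNorm.div, h1]
    exact div_lt_self (by linarith) ht
  have h3 : padicNorm p (x / (1 - t) - x) = padicNorm p x := by
    rw [← padicNorm.neg, neg_sub]
    exact padicNorm_sub_of_lt h2
  have h4 : padicNorm p (SmapRat x t) = padicNorm p x := by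
    rw [← h3]
    refine padicNorm_sub_of_lt ?_
    rw [h3]
    exact (padicNorm.of_int _).trans_lt hx
  rwa [h4]

lemma one_lt_padicNorm_of_dvd_den {p : ℕ} [Fact p.Prime] {x : ℚ} (h : p ∣ x.den) :
    1 < padicNorm p x := by
  have hden : padicNorm p (x.den : ℚ) < 1 := (padicNorm.nat_lt_one_iff _).2 h
  have hden0 : 0 < padicNorm p (x.den : ℚ) :=
    lt_of_le_of_ne (padicNorm.nonneg _)
      (padicNorm.nonzero (by exact_mod_cast x.den_ne_zero)).symm
  have hnum : padicNorm p (x.num : ℚ) = 1 := by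
    rw [padicNorm.int_eq_one_iff]
    intro hd
    have h' : p ∣ x.num.natAbs := Int.natCast_dvd.1 hd
    have := Nat.dvd_gcd h' h
    rw [x.reduced.gcd_eq_one] at this
    exact (Fact.out : p.Prime).one_lt.ne' (Nat.dvd_one.1 this)
  rw [← Rat.num_div_den x, padicNorm.div, hnum]
  exact (one_lt_div hden0).2 hden

/-- For a positive rational x, every rational in (0,1) has a finite backward
x-continued-fraction expansion if and only if x is a positive integer. -/
theorem stmt18 (x : ℚ) (hx : 0 < x) :
    (∀ t : ℚ, 0 < t → t < 1 → ∃ n : ℕ, (Smap (x : ℝ))^[n] (t : ℝ) = 0) ↔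
      ∃ m : ℕ, 0 < m ∧ x = m := by
  constructor
  · intro H
    by_cases hden : x.den = 1
    · have hnum := Rat.num_pos.2 hx
      refine ⟨x.num.toNat, by omega, ?_⟩
      have h1 : ((x.num.toNat : ℤ) : ℚ) = x.num := by rw [Int.toNat_of_nonneg hnum.le]
      rw [← Int.cast_natCast, h1]
      exact (Rat.den_eq_one_iff x).1 hden |>.symm
    · exfalso
      obtain ⟨p, hp, hpd⟩ := Nat.exists_prime_and_dvd hden
      have : Fact p.Prime := ⟨hp⟩
      have hxp := one_lt_padicNorm_of_dvd_den hpd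
      have hp1 : (1 : ℚ) < p := by exact_mod_cast hp.one_lt
      obtain ⟨n, hn⟩ := H (1 / p) (by positivity) ((div_lt_one (by linarith)).2 hp1)
      rw [Smap_iterate_cast, Rat.cast_eq_zero] at hn
      have inv : ∀ k : ℕ, 1 < padicNorm p ((SmapRat x)^[k] (1 / p)) := by
        intro k
        induction k with
        | zero =>
          rw [Function.iterate_zero_apply, padicNorm.div, padicNorm.one,
            padicNorm.padicNorm_p_of_prime, one_div, inv_inv]
          exact hp1
        | succ k ih =>
          rw [Function.iterate_succ_apply']
          exact one_lt_padicNorm_SmapRat hxp ih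
      have := inv n
      rw [hn, padicNorm.zero] at this
      linarith
  · rintro ⟨m, -, rfl⟩ t h0 h1
    obtain ⟨n, hn⟩ := exists_iterate_eq_zero m t.den t h0.le h1 le_rfl
    exact ⟨n, by rw [Smap_iterate_cast, hn, Rat.cast_zero]⟩
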